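/- Let (X,r) be a set-theoretic YBE solution with r(x,y) = (σ_x(y), γ_y(x)), and suppose each σ_x : X → X is bijective. Define F(x,y) := (x, σ_x(y)), Φ(x,y,z) := (x, σ_x(y), σ_{γ_y(x)}(z)), and Ψ(x,y,z) := (x, y, σ_x(σ_y(z))). Then (F,Φ,Ψ) is a Drinfeld twist on (X,r), and the twisted solution is given by (F∘r∘F⁻¹)(x,y) = (y, σ_y(γ_{σ_x⁻¹(y)}(x))). -/

import Mathlib

/-!
The first component of the braid relation at `(x, y, z)` says `σ_x σ_y = σ_{σ_x y} σ_{γ_y x}`. This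
is the only nontrivial component of (T1), and it makes the product `σ_x σ_y` invariant under `r`,
which is (T3). The nontrivial components of (T2) are the first two components of the braid relation.
Finally `F ∘ r ∘ F⁻¹` is computed at `F (x, z) = (x, σ_x z)`, with `z = σ_x⁻¹ y`.
-/

namespace YBETwist

/-- Apply a map on `X × X` to the factors 1,2 of a triple: `f₁₂ = f × id`. -/
def E12 {X : Type*} (f : (X × X) ≃ (X × X)) : (X × X × X) ≃ (X × X × X) :=
  ((Equiv.prodAssoc X X X).symm.trans (f.prodCongr (Equiv.refl X))).trans
    (Equiv.prodAssoc X X X)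

/-- Apply a map on `X × X` to the factors 2,3 of a triple: `f₂₃ = id × f`. -/
def E23 {X : Type*} (f : (X × X) ≃ (X × X)) : (X × X × X) ≃ (X × X × X) :=
  (Equiv.refl X).prodCongr f

/-- The braid relation `r₂₃ ∘ r₁₂ ∘ r₂₃ = r₁₂ ∘ r₂₃ ∘ r₁₂`; a set-theoretic YBE solution is a
bijection `r : X² → X²` satisfying it. -/
def IsBraided {X : Type*} (r : (X × X) ≃ (X × X)) : Prop :=
  ∀ p : X × X × X, E23 r (E12 r (E23 r p)) = E12 r (E23 r (E12 r p))

/-- A Drinfeld twist `(F, Φ, Ψ)` on a set-theoretic YBE solution `(X, r)`. -/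
structure IsTwist {X : Type*} (r F : (X × X) ≃ (X × X))
    (Φ Ψ : (X × X × X) ≃ (X × X × X)) : Prop where
  t1 : ∀ p, E12 F (Ψ p) = E23 F (Φ p)
  t2 : ∀ p, Φ (E23 r p) = E23 r (Φ p)
  t3 : ∀ p, Ψ (E12 r p) = E12 r (Ψ p)

/-- The twisted map `F ∘ r ∘ F⁻¹`. -/
def twisted {X : Type*} (r F : (X × X) ≃ (X × X)) : (X × X) ≃ (X × X) :=
  (F.symm.trans r).trans F

theorem E12_apply {X : Type*} (f : (X × X) ≃ (X × X)) (x y z : X) :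
    E12 f (x, y, z) = ((f (x, y)).1, (f (x, y)).2, z) := rfl

theorem E23_apply {X : Type*} (f : (X × X) ≃ (X × X)) (x y z : X) :
    E23 f (x, y, z) = (x, f (y, z)) := rfl

theorem twisted_apply_apply {X : Type*} (r F : (X × X) ≃ (X × X)) (p : X × X) :
    twisted r F (F p) = F (r p) := by
  simp only [twisted, Equiv.trans_apply, Equiv.symm_apply_apply]

section Components

variable {X : Type*} {r F : (X × X) ≃ (X × X)} {Φ Ψ : (X × X × X) ≃ (X × X × X)}
  {σ γ : X → X → X}

theorem isBraided_iff (hr : ∀ x y, r (x, y) = (σ x y, γ y x)) :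
    IsBraided r ↔ ∀ x y z,
      σ x (σ y z) = σ (σ x y) (σ (γ y x) z) ∧
      σ (γ (σ y z) x) (γ z y) = γ (σ (γ y x) z) (σ x y) ∧
      γ (γ z y) (γ (σ y z) x) = γ z (γ y x) := by
  simp only [IsBraided, Prod.forall, E12_apply, E23_apply, hr, Prod.mk.injEq]

theorem E12_comp_eq_E23_comp_of_sigma_sigma
    (hF : ∀ x y, F (x, y) = (x, σ x y))
    (hΦ : ∀ x y z, Φ (x, y, z) = (x, σ x y, σ (γ y x) z))
    (hΨ : ∀ x y z, Ψ (x, y, z) = (x, y, σ x (σ y z)))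
    (hσσ : ∀ x y z, σ x (σ y z) = σ (σ x y) (σ (γ y x) z)) (p : X × X × X) :
    E12 F (Ψ p) = E23 F (Φ p) := by
  obtain ⟨x, y, z⟩ := p
  calc E12 F (Ψ (x, y, z))
      = (x, σ x y, σ x (σ y z)) := by simp only [hΨ, E12_apply, hF]
    _ = (x, σ x y, σ (σ x y) (σ (γ y x) z)) := by rw [hσσ]
    _ = E23 F (Φ (x, y, z)) := by simp only [hΦ, E23_apply, hF]

theorem comm_E23_of_sigma_sigma_of_sigma_gamma
    (hr : ∀ x y, r (x, y) = (σ x y, γ y x))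
    (hΦ : ∀ x y z, Φ (x, y, z) = (x, σ x y, σ (γ y x) z))
    (hσσ : ∀ x y z, σ x (σ y z) = σ (σ x y) (σ (γ y x) z))
    (hσγ : ∀ x y z, σ (γ (σ y z) x) (γ z y) = γ (σ (γ y x) z) (σ x y)) (p : X × X × X) :
    Φ (E23 r p) = E23 r (Φ p) := by
  obtain ⟨x, y, z⟩ := p
  calc Φ (E23 r (x, y, z))
      = (x, σ x (σ y z), σ (γ (σ y z) x) (γ z y)) := by simp only [E23_apply, hr, hΦ]
    _ = (x, σ (σ x y) (σ (γ y x) z), γ (σ (γ y x) z) (σ x y)) := by rw [hσσ, hσγ]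
    _ = E23 r (Φ (x, y, z)) := by simp only [hΦ, E23_apply, hr]

theorem comm_E12_of_sigma_sigma
    (hr : ∀ x y, r (x, y) = (σ x y, γ y x))
    (hΨ : ∀ x y z, Ψ (x, y, z) = (x, y, σ x (σ y z)))
    (hσσ : ∀ x y z, σ x (σ y z) = σ (σ x y) (σ (γ y x) z)) (p : X × X × X) :
    Ψ (E12 r p) = E12 r (Ψ p) := by
  obtain ⟨x, y, z⟩ := p
  calc Ψ (E12 r (x, y, z))
      = (σ x y, γ y x, σ (σ x y) (σ (γ y x) z)) := by simp only [E12_apply, hr, hΨ]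
    _ = (σ x y, γ y x, σ x (σ y z)) := by rw [← hσσ]
    _ = E12 r (Ψ (x, y, z)) := by simp only [hΨ, E12_apply, hr]

theorem twisted_apply_sigma
    (hr : ∀ x y, r (x, y) = (σ x y, γ y x)) (hF : ∀ x y, F (x, y) = (x, σ x y)) (x z : X) :
    twisted r F (x, σ x z) = (σ x z, σ (σ x z) (γ z x)) := by
  rw [← hF, twisted_apply_apply, hr, hF]

end Components

theorem sigma_twist {X : Type*} (r F : (X × X) ≃ (X × X))
    (Φ Ψ : (X × X × X) ≃ (X × X × X)) (σ γ τ : X → X → X)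
    (hr : ∀ x y, r (x, y) = (σ x y, γ y x))
    (hτ : ∀ x, Function.LeftInverse (τ x) (σ x) ∧ Function.RightInverse (τ x) (σ x))
    (hbr : IsBraided r)
    (hF : ∀ x y, F (x, y) = (x, σ x y))
    (hΦ : ∀ x y z, Φ (x, y, z) = (x, σ x y, σ (γ y x) z))
    (hΨ : ∀ x y z, Ψ (x, y, z) = (x, y, σ x (σ y z))) :
    IsTwist r F Φ Ψ ∧
    ∀ x y, twisted r F (x, y) = (y, σ y (γ (τ x y) x)) := by
  have hcomponents := (isBraided_iff hr).1 hbr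
  have hσσ x y z := (hcomponents x y z).1
  have hσγ x y z := (hcomponents x y z).2.1
  refine ⟨⟨E12_comp_eq_E23_comp_of_sigma_sigma hF hΦ hΨ hσσ,
    comm_E23_of_sigma_sigma_of_sigma_gamma hr hΦ hσσ hσγ,
    comm_E12_of_sigma_sigma hr hΨ hσσ⟩, fun x y ↦ ?_⟩
  have hστ : σ x (τ x y) = y := (hτ x).2 y
  simpa only [hστ] using twisted_apply_sigma hr hF x (τ x y)

end YBETwist
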